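/- arXiv:2306.03832 — 4 statements merged into one kernel-verified Lean document; each statement's English description precedes it below -/
import Mathlib

section
/- For every h with 2 ≤ h ≤ H and all histories σ, σ' ∈ Σ_{h−1}: if the state–action pairs at step h−1 in σ and σ' coincide (i.e., the last records of σ and σ' have the same state component s and the same joint-action component a), then the inducible value sets satisfy 𝒱_h(σ) = 𝒱_h(σ'). -/
open scoped BigOperators

/-- A one-step record `(s, ω, reported ω̃ᴬ, recommended joint action a, played ãᴬ)`. -/
abbrev Rec (S AP AA OP OA : Type) : Type :=
  S × (OP × OA) × OA × (AP × AA) × AA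

/-- Histories: lists of one-step records, with the most recent record first. -/
abbrev Hist (S AP AA OP OA : Type) : Type :=
  List (Rec S AP AA OP OA)

/-- A (history-dependent) policy of the principal: for every past history,
own observation and reported observation of the agent, a probability
distribution over joint actions. -/
def Policy (S AP AA OP OA : Type) [Fintype AP] [Fintype AA] : Type :=
  { π : Hist S AP AA OP OA → OP → OA → AP × AA → ℝ //
    ∀ σ ωP ωA, (∀ a, 0 ≤ π σ ωP ωA a) ∧ ∑ a, π σ ωP ωA a = 1 }

/-- A deviation plan of the agent: a report map and an action map. -/
structure DevPlan (S AP AA OP OA : Type) where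
  rep : Hist S AP AA OP OA → OA → OA
  act : Hist S AP AA OP OA → OA → AA → AA

variable {S AP AA OP OA : Type} [Fintype S] [Fintype AP] [Fintype AA] [Fintype OP]
  [Fintype OA]

/-- The truthful plan `⊥`. -/
def DevPlan.truthful : DevPlan S AP AA OP OA :=
  ⟨fun _ ωA => ωA, fun _ _ aA => aA⟩

/-- The transition distribution `p_{h-1}(· | σ)`: the initial distribution `p0` at the
empty history, and otherwise `p` at index `σ.length` applied to the state–action pair
of the last (most recent) record of `σ`. -/
def pcond (p0 : S × (OP × OA) → ℝ) (p : ℕ → S × (AP × AA) → S × (OP × OA) → ℝ) :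
    Hist S AP AA OP OA → S × (OP × OA) → ℝ
  | [] => p0
  | r :: rest => p (rest.length + 1) (r.1, r.2.2.2.1)

/-- Backward-recursive value with `n` remaining steps (so `n = H - h` at step `h`,
where `h = σ.length + 1`). -/
noncomputable def val (p0 : S × (OP × OA) → ℝ)
    (p : ℕ → S × (AP × AA) → S × (OP × OA) → ℝ)
    (r : ℕ → S → AP × AA → ℝ) (π : Policy S AP AA OP OA) (ρ : DevPlan S AP AA OP OA) :
    ℕ → Hist S AP AA OP OA → ℝ
  | 0, _ => 0
  | n + 1, σ =>
      ∑ x : S × (OP × OA),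
        pcond p0 p σ x *
          ∑ a : AP × AA,
            π.1 σ x.2.1 (ρ.rep σ x.2.2) a *
              (r (σ.length + 1) x.1 (a.1, ρ.act σ x.2.2 a.2) +
                val p0 p r π ρ n ((x.1, x.2, ρ.rep σ x.2.2, a, ρ.act σ x.2.2 a.2) :: σ))

/-- The value function `V_h^{i,π,ρ}(σ)` (for reward function `r` of player `i`). -/
noncomputable def V (H : ℕ) (p0 : S × (OP × OA) → ℝ)
    (p : ℕ → S × (AP × AA) → S × (OP × OA) → ℝ)
    (r : ℕ → S → AP × AA → ℝ) (π : Policy S AP AA OP OA) (ρ : DevPlan S AP AA OP OA)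
    (h : ℕ) (σ : Hist S AP AA OP OA) : ℝ :=
  val p0 p r π ρ (H - h) σ

/-- `ρ` is a best response of the agent to `π` at `(h, σ)`. -/
def IsBR (H : ℕ) (p0 : S × (OP × OA) → ℝ)
    (p : ℕ → S × (AP × AA) → S × (OP × OA) → ℝ)
    (rA : ℕ → S → AP × AA → ℝ) (π : Policy S AP AA OP OA) (ρ : DevPlan S AP AA OP OA)
    (h : ℕ) (σ : Hist S AP AA OP OA) : Prop :=
  ∀ ρ' : DevPlan S AP AA OP OA, V H p0 p rA π ρ' h σ ≤ V H p0 p rA π ρ h σ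

/-- The data `(H, p0, p, rP, rA)` is a valid model: horizon at least 1, `p0` and the
kernels `p_h` (for `1 ≤ h ≤ H-1`) are probability distributions, rewards lie in `[0,1]`
for `1 ≤ h ≤ H`, and step-`H` rewards vanish. -/
def IsModel (H : ℕ) (p0 : S × (OP × OA) → ℝ)
    (p : ℕ → S × (AP × AA) → S × (OP × OA) → ℝ)
    (rP rA : ℕ → S → AP × AA → ℝ) : Prop :=
  1 ≤ H ∧
  (∀ x, 0 ≤ p0 x) ∧ (∑ x, p0 x = 1) ∧
  (∀ h sa, 1 ≤ h → h < H → (∀ x, 0 ≤ p h sa x) ∧ ∑ x, p h sa x = 1) ∧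
  (∀ h s a, 1 ≤ h → h ≤ H →
    rP h s a ∈ Set.Icc (0 : ℝ) 1 ∧ rA h s a ∈ Set.Icc (0 : ℝ) 1) ∧
  (∀ s a, rP H s a = 0 ∧ rA H s a = 0)

/-- The inducible value set `𝒱_h(σ)`. -/
def IndSet (H : ℕ) (p0 : S × (OP × OA) → ℝ)
    (p : ℕ → S × (AP × AA) → S × (OP × OA) → ℝ)
    (rP rA : ℕ → S → AP × AA → ℝ) (h : ℕ) (σ : Hist S AP AA OP OA) : Set (ℝ × ℝ) :=
  { v | ∃ (π : Policy S AP AA OP OA) (ρ : DevPlan S AP AA OP OA),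
      IsBR H p0 p rA π ρ h σ ∧
      v = (V H p0 p rP π ρ h σ, V H p0 p rA π ρ h σ) }

/-- Replace everything but the first (most recent) records beyond length `n` by `σ`. -/
def swapTail (n : ℕ) (σ τ : Hist S AP AA OP OA) : Hist S AP AA OP OA :=
  τ.take (τ.length - n) ++ σ

theorem swapTail_append (n : ℕ) (σ σ' l : Hist S AP AA OP OA) (hn : σ'.length = n) :
    swapTail n σ (l ++ σ') = l ++ σ := by
  subst hn
  simp [swapTail]

theorem val_transport (p0 : S × (OP × OA) → ℝ)
    (p : ℕ → S × (AP × AA) → S × (OP × OA) → ℝ)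
    (r : ℕ → S → AP × AA → ℝ) (π π' : Policy S AP AA OP OA) (ρ ρ' : DevPlan S AP AA OP OA)
    (σ σ' : Hist S AP AA OP OA) (hlen : σ.length = σ'.length)
    (hp : pcond p0 p σ = pcond p0 p σ')
    (hπ : ∀ l, π.1 (l ++ σ) = π'.1 (l ++ σ'))
    (hrep : ∀ l, ρ.rep (l ++ σ) = ρ'.rep (l ++ σ'))
    (hact : ∀ l, ρ.act (l ++ σ) = ρ'.act (l ++ σ')) (n : ℕ) :
    ∀ l, val p0 p r π ρ n (l ++ σ) = val p0 p r π' ρ' n (l ++ σ') := by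
  induction n with
  | zero => intro l; simp [val]
  | succ n ih =>
    intro l
    have hp' : pcond p0 p (l ++ σ) = pcond p0 p (l ++ σ') := by
      cases l with
      | nil => simpa using hp
      | cons a l => simp [pcond, hlen]
    have hl : (l ++ σ).length = (l ++ σ').length := by simp [hlen]
    simp only [val, hp', hl, hπ, hrep, hact]
    refine Finset.sum_congr rfl fun x _ => ?_
    congr 1
    refine Finset.sum_congr rfl fun a _ => ?_
    congr 2
    exact ih (_ :: l)

theorem indSet_subset_aux
    (H : ℕ) (p0 : S × (OP × OA) → ℝ) (p : ℕ → S × (AP × AA) → S × (OP × OA) → ℝ)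
    (rP rA : ℕ → S → AP × AA → ℝ) (h : ℕ)
    (σ σ' : Hist S AP AA OP OA) (hlen : σ.length = σ'.length)
    (hp : pcond p0 p σ = pcond p0 p σ') :
    IndSet H p0 p rP rA h σ ⊆ IndSet H p0 p rP rA h σ' := by
  rintro v ⟨π, ρ, hbr, rfl⟩
  have key : ∀ l, swapTail σ'.length σ (l ++ σ') = l ++ σ :=
    fun l => swapTail_append _ σ σ' l rfl
  have key' : ∀ l, swapTail σ.length σ' (l ++ σ) = l ++ σ' :=
    fun l => swapTail_append _ σ' σ l rfl
  let π' : Policy S AP AA OP OA :=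
    ⟨fun τ => π.1 (swapTail σ'.length σ τ), fun τ => π.2 (swapTail σ'.length σ τ)⟩
  let ρ' : DevPlan S AP AA OP OA :=
    ⟨fun τ => ρ.rep (swapTail σ'.length σ τ), fun τ => ρ.act (swapTail σ'.length σ τ)⟩
  have hπ : ∀ l, π.1 (l ++ σ) = π'.1 (l ++ σ') := fun l => by simp only [π', key]
  have e : ∀ r, V H p0 p r π ρ h σ = V H p0 p r π' ρ' h σ' := fun r =>
    val_transport p0 p r π π' ρ ρ' σ σ' hlen hp hπ
      (fun l => by simp only [ρ', key]) (fun l => by simp only [ρ', key]) (H - h) []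
  refine ⟨π', ρ', fun ρ₂ => ?_, by rw [e, e]⟩
  let ρ₃ : DevPlan S AP AA OP OA :=
    ⟨fun τ => ρ₂.rep (swapTail σ.length σ' τ), fun τ => ρ₂.act (swapTail σ.length σ' τ)⟩
  have e₂ : V H p0 p rA π ρ₃ h σ = V H p0 p rA π' ρ₂ h σ' :=
    val_transport p0 p rA π π' ρ₃ ρ₂ σ σ' hlen hp hπ
      (fun l => by simp only [ρ₃, key']) (fun l => by simp only [ρ₃, key']) (H - h) []
  rw [← e, ← e₂]
  exact hbr ρ₃

/-- For `2 ≤ h ≤ H` and histories `σ, σ' ∈ Σ_{h-1}`, if the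
state–action pairs of the last records of `σ` and `σ'` coincide, then the inducible
value sets coincide: `𝒱_h(σ) = 𝒱_h(σ')`. -/
theorem indSet_depends_only_on_last_state_action
    [Nonempty S] [Nonempty AP] [Nonempty AA] [Nonempty OP] [Nonempty OA]
    (H : ℕ) (p0 : S × (OP × OA) → ℝ) (p : ℕ → S × (AP × AA) → S × (OP × OA) → ℝ)
    (rP rA : ℕ → S → AP × AA → ℝ) (hM : IsModel H p0 p rP rA)
    (h : ℕ) (h2 : 2 ≤ h) (hH : h ≤ H)
    (σ σ' : Hist S AP AA OP OA) (hlen : σ.length = h - 1) (hlen' : σ'.length = h - 1)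
    (c c' : Rec S AP AA OP OA) (hc : σ.head? = some c) (hc' : σ'.head? = some c')
    (hstate : c.1 = c'.1) (haction : c.2.2.2.1 = c'.2.2.2.1) :
    IndSet H p0 p rP rA h σ = IndSet H p0 p rP rA h σ' := by
  have hl : σ.length = σ'.length := hlen.trans hlen'.symm
  have hp : pcond p0 p σ = pcond p0 p σ' := by
    cases σ with
    | nil => simp at hc
    | cons a l =>
      cases σ' with
      | nil => simp at hc'
      | cons a' l' =>
        simp only [List.head?_cons, Option.some.injEq] at hc hc'
        subst hc hc'
        simp only [List.length_cons] at hl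
        simp only [pcond, hl, hstate, haction]
  exact Set.Subset.antisymm (indSet_subset_aux H p0 p rP rA h σ σ' hl hp)
    (indSet_subset_aux H p0 p rP rA h σ' σ hl.symm hp.symm)
end

section
/- Let M > 0 and δ > 0, and let K ⊆ [0, M] × ℝ be a nonempty compact convex subset of ℝ². Let G := { kδ : k ∈ ℕ, kδ ≤ M } ∪ {M}. Let W ⊆ K be a finite set containing: for each w ∈ G with K ∩ ({w} × ℝ) nonempty, a point of K ∩ ({w} × ℝ) with minimal second coordinate and a point with maximal second coordinate; together with a point of K with minimal second coordinate over all of K and a point with maximal second coordinate over all of K. Then the convex hull C of W satisfies C ⊆ K, and for every v ∈ K there exists x ∈ C with x₂ = v₂ and x₁ ≥ v₁ − δ. -/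
/-- A convex set containing `a` and `b` contains a point of the segment at each height between. -/
theorem slice_height_aux (S : Set (ℝ × ℝ)) (hS : Convex ℝ S) (a b : ℝ × ℝ) (ha : a ∈ S)
    (hb : b ∈ S) (t : ℝ) (h1 : a.2 ≤ t) (h2 : t ≤ b.2) :
    ∃ s : ℝ, ((1 - s) * a.1 + s * b.1, t) ∈ S := by
  rcases eq_or_lt_of_le (h1.trans h2) with h | h
  · refine ⟨0, ?_⟩
    have ht : t = a.2 := by linarith
    subst ht
    simpa using ha
  · have hpos : 0 < b.2 - a.2 := by linarith
    refine ⟨(t - a.2) / (b.2 - a.2), ?_⟩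
    have hs0 : 0 ≤ (t - a.2) / (b.2 - a.2) := div_nonneg (by linarith) hpos.le
    have hs1 : (t - a.2) / (b.2 - a.2) ≤ 1 := by
      rw [div_le_one hpos]; linarith
    have hs : (t - a.2) / (b.2 - a.2) * (b.2 - a.2) = t - a.2 := div_mul_cancel₀ _ hpos.ne'
    generalize (t - a.2) / (b.2 - a.2) = s at *
    have := hS ha hb (sub_nonneg.2 hs1) hs0 (by ring)
    convert this using 1
    ext
    · simp
    · simp; linarith

/-- Slicing approximation of a compact convex set `K ⊆ [0, M] × ℝ`:
if `W ⊆ K` is a finite set containing, for each grid value `w ∈ G` whose slice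
`K ∩ ({w} × ℝ)` is nonempty, a point of the slice of minimal and one of maximal second
coordinate, together with points of `K` of globally minimal and maximal second
coordinate, then the convex hull `C` of `W` satisfies `C ⊆ K` and every `v ∈ K` is
matched by some `x ∈ C` with `x₂ = v₂` and `x₁ ≥ v₁ − δ`. -/
theorem convexHull_slice_approx (M δ : ℝ) (hM : 0 < M) (hδ : 0 < δ)
    (K : Set (ℝ × ℝ)) (hKsub : K ⊆ {x : ℝ × ℝ | x.1 ∈ Set.Icc 0 M})
    (hKne : K.Nonempty) (hKcomp : IsCompact K) (hKconv : Convex ℝ K)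
    (G : Set ℝ) (hG : G = {w : ℝ | ∃ k : ℕ, w = k * δ ∧ k * δ ≤ M} ∪ {M})
    (W : Set (ℝ × ℝ)) (hWfin : W.Finite) (hWK : W ⊆ K)
    (hslice_min : ∀ w ∈ G, (K ∩ {x : ℝ × ℝ | x.1 = w}).Nonempty →
      ∃ x ∈ W, x.1 = w ∧ ∀ y ∈ K, y.1 = w → x.2 ≤ y.2)
    (hslice_max : ∀ w ∈ G, (K ∩ {x : ℝ × ℝ | x.1 = w}).Nonempty →
      ∃ x ∈ W, x.1 = w ∧ ∀ y ∈ K, y.1 = w → y.2 ≤ x.2)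
    (hglob_min : ∃ x ∈ W, ∀ y ∈ K, x.2 ≤ y.2)
    (hglob_max : ∃ x ∈ W, ∀ y ∈ K, y.2 ≤ x.2) :
    convexHull ℝ W ⊆ K ∧
      ∀ v ∈ K, ∃ x ∈ convexHull ℝ W, x.2 = v.2 ∧ v.1 - δ ≤ x.1 := by
  have hC : Convex ℝ (convexHull ℝ W) := convex_convexHull ℝ W
  have hCK : convexHull ℝ W ⊆ K := convexHull_min hWK hKconv
  have hsub : W ⊆ convexHull ℝ W := subset_convexHull ℝ W
  refine ⟨hCK, fun v hv => ?_⟩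
  obtain ⟨a, haW, ha⟩ := hglob_min
  obtain ⟨b, hbW, hb⟩ := hglob_max
  obtain ⟨s, hp⟩ := slice_height_aux _ hC a b (hsub haW) (hsub hbW) v.2 (ha v hv) (hb v hv)
  generalize (1 - s) * a.1 + s * b.1 = p at hp
  by_cases hpv : v.1 - δ ≤ p
  · exact ⟨_, hp, rfl, hpv⟩
  push Not at hpv
  have hv01 := hKsub hv
  obtain ⟨hv0, hvM⟩ : 0 ≤ v.1 ∧ v.1 ≤ M := hv01
  have hk1 : (⌊v.1 / δ⌋₊ : ℝ) * δ ≤ v.1 :=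
    (le_div_iff₀ hδ).1 (Nat.floor_le (div_nonneg hv0 hδ.le))
  have hk2 : v.1 < ((⌊v.1 / δ⌋₊ : ℝ) + 1) * δ :=
    (div_lt_iff₀ hδ).1 (Nat.lt_floor_add_one _)
  have hwG : (⌊v.1 / δ⌋₊ : ℝ) * δ ∈ G := by
    rw [hG]
    exact Or.inl ⟨_, rfl, hk1.trans hvM⟩
  generalize (⌊v.1 / δ⌋₊ : ℝ) = k at *
  have hpos : 0 < v.1 - p := by linarith
  have hwK : (k * δ, v.2) ∈ K := by
    have hs0 : 0 ≤ (k * δ - p) / (v.1 - p) := div_nonneg (by linarith) hpos.le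
    have hs1 : (k * δ - p) / (v.1 - p) ≤ 1 := by
      rw [div_le_one hpos]; linarith
    have hs : (k * δ - p) / (v.1 - p) * (v.1 - p) = k * δ - p := div_mul_cancel₀ _ hpos.ne'
    generalize (k * δ - p) / (v.1 - p) = r at *
    have := hKconv (hCK hp) hv (sub_nonneg.2 hs1) hs0 (by ring)
    convert this using 1
    ext
    · simp; linarith
    · simp; ring
  obtain ⟨c, hcW, hc1, hc⟩ := hslice_min _ hwG ⟨_, hwK, rfl⟩
  obtain ⟨d, hdW, hd1, hd⟩ := hslice_max _ hwG ⟨_, hwK, rfl⟩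
  obtain ⟨r, hr⟩ := slice_height_aux _ hC c d (hsub hcW) (hsub hdW) v.2
    (hc (k * δ, v.2) hwK rfl) (hd (k * δ, v.2) hwK rfl)
  refine ⟨_, hr, rfl, ?_⟩
  simp only [hc1, hd1]
  linarith
end

section
/- Let K ⊆ ℝ² be a nonempty compact convex set, δ > 0, k ∈ ℤ, and let B := { x ∈ ℝ² : kδ ≤ x₁ ≤ (k+1)δ } be the corresponding band. Let W ⊆ K be a finite set containing: for each w ∈ {kδ, (k+1)δ} with K ∩ ({w} × ℝ) nonempty, a point of K ∩ ({w} × ℝ) with minimal second coordinate and a point with maximal second coordinate; together with a point of K with minimal second coordinate over all of K and a point with maximal second coordinate over all of K. Then for every v ∈ K ∩ B, the set W ∩ B is nonempty and min_{x ∈ W ∩ B} x₂ ≤ v₂ ≤ max_{x ∈ W ∩ B} x₂. -/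
theorem cross_aux (K : Set (ℝ × ℝ)) (hK : Convex ℝ K) (p v : ℝ × ℝ) (hp : p ∈ K) (hv : v ∈ K)
    (w : ℝ) (h : (p.1 < w ∧ w ≤ v.1) ∨ (v.1 ≤ w ∧ w < p.1)) :
    ∃ y ∈ K, y.1 = w ∧ (p.2 ≤ v.2 → y.2 ≤ v.2) ∧ (v.2 ≤ p.2 → v.2 ≤ y.2) := by
  obtain ⟨t, h0, h1, ht⟩ : ∃ t : ℝ, 0 ≤ t ∧ t ≤ 1 ∧ (1 - t) * p.1 + t * v.1 = w := by
    rcases h with ⟨ha, hb⟩ | ⟨ha, hb⟩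
    · have hd : 0 < v.1 - p.1 := by linarith
      refine ⟨(w - p.1) / (v.1 - p.1), div_nonneg (by linarith) hd.le,
        (div_le_one hd).2 (by linarith), ?_⟩
      have := div_mul_cancel₀ (w - p.1) hd.ne'
      linarith
    · have hd : 0 < p.1 - v.1 := by linarith
      refine ⟨(p.1 - w) / (p.1 - v.1), div_nonneg (by linarith) hd.le,
        (div_le_one hd).2 (by linarith), ?_⟩
      have := div_mul_cancel₀ (p.1 - w) hd.ne'
      linarith
  refine ⟨(1 - t) • p + t • v, hK hp hv (by linarith) h0 (by ring), by simpa using ht, ?_, ?_⟩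
  · intro h
    simp only [Prod.snd_add, Prod.smul_snd, smul_eq_mul]
    nlinarith
  · intro h
    simp only [Prod.snd_add, Prod.smul_snd, smul_eq_mul]
    nlinarith

/-- Band case-analysis step: let `K ⊆ ℝ²` be nonempty compact convex,
`B` the band `{x : kδ ≤ x₁ ≤ (k+1)δ}`, and `W ⊆ K` a finite set containing slice
extrema (in the second coordinate) at the two boundary values `kδ, (k+1)δ` whenever the
corresponding slice of `K` is nonempty, together with global extrema of the second
coordinate over `K`. Then for every `v ∈ K ∩ B` the set `W ∩ B` is nonempty and
`min_{x ∈ W ∩ B} x₂ ≤ v₂ ≤ max_{x ∈ W ∩ B} x₂` (expressed by exhibiting witnesses). -/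
theorem band_slice_bounds (K : Set (ℝ × ℝ)) (hKne : K.Nonempty)
    (hKcomp : IsCompact K) (hKconv : Convex ℝ K)
    (δ : ℝ) (hδ : 0 < δ) (k : ℤ)
    (B : Set (ℝ × ℝ)) (hB : B = {x : ℝ × ℝ | (k : ℝ) * δ ≤ x.1 ∧ x.1 ≤ ((k : ℝ) + 1) * δ})
    (W : Set (ℝ × ℝ)) (hWfin : W.Finite) (hWK : W ⊆ K)
    (hslice_min : ∀ w ∈ ({(k : ℝ) * δ, ((k : ℝ) + 1) * δ} : Set ℝ),
      (K ∩ {x : ℝ × ℝ | x.1 = w}).Nonempty →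
      ∃ x ∈ W, x.1 = w ∧ ∀ y ∈ K, y.1 = w → x.2 ≤ y.2)
    (hslice_max : ∀ w ∈ ({(k : ℝ) * δ, ((k : ℝ) + 1) * δ} : Set ℝ),
      (K ∩ {x : ℝ × ℝ | x.1 = w}).Nonempty →
      ∃ x ∈ W, x.1 = w ∧ ∀ y ∈ K, y.1 = w → y.2 ≤ x.2)
    (hglob_min : ∃ x ∈ W, ∀ y ∈ K, x.2 ≤ y.2)
    (hglob_max : ∃ x ∈ W, ∀ y ∈ K, y.2 ≤ x.2) :
    ∀ v ∈ K ∩ B, (W ∩ B).Nonempty ∧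
      (∃ x ∈ W ∩ B, x.2 ≤ v.2) ∧ (∃ x ∈ W ∩ B, v.2 ≤ x.2) := by
  subst hB
  rintro v ⟨hvK, hv1, hv2⟩
  have hab : (k : ℝ) * δ ≤ ((k : ℝ) + 1) * δ := by linarith
  have hmin : ∃ x ∈ W ∩ {x : ℝ × ℝ | (k : ℝ) * δ ≤ x.1 ∧ x.1 ≤ ((k : ℝ) + 1) * δ},
      x.2 ≤ v.2 := by
    obtain ⟨m, hmW, hm⟩ := hglob_min
    by_cases h1 : m.1 < (k : ℝ) * δ
    · obtain ⟨y, hyK, hy1, hy2, -⟩ :=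
        cross_aux K hKconv m v (hWK hmW) hvK _ (Or.inl ⟨h1, hv1⟩)
      obtain ⟨x, hxW, hx1, hx⟩ := hslice_min _ (by simp) ⟨y, hyK, hy1⟩
      exact ⟨x, ⟨hxW, hx1.ge, hx1.le.trans hab⟩, (hx y hyK hy1).trans (hy2 (hm v hvK))⟩
    by_cases h2 : ((k : ℝ) + 1) * δ < m.1
    · obtain ⟨y, hyK, hy1, hy2, -⟩ :=
        cross_aux K hKconv m v (hWK hmW) hvK _ (Or.inr ⟨hv2, h2⟩)
      obtain ⟨x, hxW, hx1, hx⟩ := hslice_min _ (by simp) ⟨y, hyK, hy1⟩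
      exact ⟨x, ⟨hxW, hab.trans hx1.ge, hx1.le⟩, (hx y hyK hy1).trans (hy2 (hm v hvK))⟩
    exact ⟨m, ⟨hmW, not_lt.1 h1, not_lt.1 h2⟩, hm v hvK⟩
  have hmax : ∃ x ∈ W ∩ {x : ℝ × ℝ | (k : ℝ) * δ ≤ x.1 ∧ x.1 ≤ ((k : ℝ) + 1) * δ},
      v.2 ≤ x.2 := by
    obtain ⟨m, hmW, hm⟩ := hglob_max
    by_cases h1 : m.1 < (k : ℝ) * δ
    · obtain ⟨y, hyK, hy1, -, hy2⟩ :=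
        cross_aux K hKconv m v (hWK hmW) hvK _ (Or.inl ⟨h1, hv1⟩)
      obtain ⟨x, hxW, hx1, hx⟩ := hslice_max _ (by simp) ⟨y, hyK, hy1⟩
      exact ⟨x, ⟨hxW, hx1.ge, hx1.le.trans hab⟩, (hy2 (hm v hvK)).trans (hx y hyK hy1)⟩
    by_cases h2 : ((k : ℝ) + 1) * δ < m.1
    · obtain ⟨y, hyK, hy1, -, hy2⟩ :=
        cross_aux K hKconv m v (hWK hmW) hvK _ (Or.inr ⟨hv2, h2⟩)
      obtain ⟨x, hxW, hx1, hx⟩ := hslice_max _ (by simp) ⟨y, hyK, hy1⟩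
      exact ⟨x, ⟨hxW, hab.trans hx1.ge, hx1.le⟩, (hy2 (hm v hvK)).trans (hx y hyK hy1)⟩
    exact ⟨m, ⟨hmW, not_lt.1 h1, not_lt.1 h2⟩, hm v hvK⟩
  obtain ⟨x, hx, hxv⟩ := hmin
  exact ⟨⟨x, hx⟩, ⟨x, hx, hxv⟩, hmax⟩
end

section
/- Let m, n ∈ ℕ, let H be a real m × n matrix and b ∈ ℝ^m, and suppose the polyhedron P := { x ∈ ℝⁿ : H x ≤ b } (the inequality holding coordinatewise) is nonempty and bounded. Then for every real number c ≥ 0 and every z ∈ ℝⁿ: H z ≤ c·b if and only if there exists x ∈ P with z = c·x. -/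
/-- Correctness of the bilinear-term linearization: if the polyhedron
`P = {x : H x ≤ b}` is nonempty and bounded, then for every `c ≥ 0` and every `z`,
`H z ≤ c • b` holds iff `z = c • x` for some `x ∈ P`. -/
theorem linearization_scaled_polyhedron (m n : ℕ)
    (H : Matrix (Fin m) (Fin n) ℝ) (b : Fin m → ℝ)
    (hne : {x : Fin n → ℝ | H.mulVec x ≤ b}.Nonempty)
    (hbd : Bornology.IsBounded {x : Fin n → ℝ | H.mulVec x ≤ b}) :
    ∀ c : ℝ, 0 ≤ c → ∀ z : Fin n → ℝ,
      (H.mulVec z ≤ c • b ↔ ∃ x : Fin n → ℝ, H.mulVec x ≤ b ∧ z = c • x) := by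
  intro c hc z
  obtain ⟨x₀, hx₀⟩ := hne
  have hx₀' : H.mulVec x₀ ≤ b := hx₀
  constructor
  · intro hz
    rcases hc.eq_or_lt with h0 | hpos
    · subst h0
      refine ⟨x₀, hx₀', ?_⟩
      rw [zero_smul] at hz ⊢
      by_contra hne
      have hzpos : 0 < ‖z‖ := norm_pos_iff.mpr hne
      obtain ⟨R, hR⟩ := hbd.exists_norm_le
      have hR0 : ‖x₀‖ ≤ R := hR x₀ hx₀
      have hn := norm_nonneg x₀
      set t : ℝ := (R + ‖x₀‖ + 1) / ‖z‖ with ht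
      have htpos : 0 ≤ t := by
        apply div_nonneg _ hzpos.le
        linarith
      have hmem : H.mulVec (x₀ + t • z) ≤ b := by
        rw [Matrix.mulVec_add, Matrix.mulVec_smul]
        intro i
        have h1 := hx₀' i
        have h2 := mul_nonpos_of_nonneg_of_nonpos htpos (hz i)
        simp only [Pi.add_apply, Pi.smul_apply, smul_eq_mul]
        linarith
      have h3 := hR _ hmem
      have h4 : ‖t • z‖ = R + ‖x₀‖ + 1 := by
        rw [norm_smul, Real.norm_of_nonneg htpos, ht, div_mul_cancel₀ _ hzpos.ne']
      have h5 : ‖t • z‖ ≤ ‖x₀ + t • z‖ + ‖x₀‖ := by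
        have h6 := norm_sub_le (x₀ + t • z) x₀
        rwa [add_sub_cancel_left] at h6
      linarith
    · refine ⟨c⁻¹ • z, ?_, by rw [smul_inv_smul₀ hpos.ne']⟩
      rw [Matrix.mulVec_smul]
      intro i
      have h1 := hz i
      simp only [Pi.smul_apply, smul_eq_mul] at h1 ⊢
      rwa [inv_mul_le_iff₀ hpos]
  · rintro ⟨x, hx, rfl⟩
    rw [Matrix.mulVec_smul]
    intro i
    exact mul_le_mul_of_nonneg_left (hx i) hc
end
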